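/- Let 𝔽_q be a finite field with q elements. There exists a set C of 3-dimensional subspaces of 𝔽_q^9 with |C| = q^{12} + q^8 + q^7 + 2q^6 + 2q^5 + 3q^4 + 2q^3 + 2q^2 + q + 1 such that the subspace distance between any two distinct elements of C is at least 4. -/

import Mathlib

/-! Split `𝔽_q^9` as `T ⊕ S` with `dim T = 3` and `dim S = 6`. The code consists of `q^12` planes meeting
`S` trivially, and of one plane through each line (two-dimensional subspace) of `S`; the number of
these lines is the Gaussian binomial
`[6 choose 2]_q = q^8 + q^7 + 2q^6 + 2q^5 + 3q^4 + 2q^3 + 2q^2 + q + 1`.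
Distance four means that distinct planes meet in dimension at most one.

Both parts rest on one family of matrices with three rows. Identify the row space `𝔽_q^n`, `n ≥ 3`,
with the field with `q^n` elements, and choose there `α`, `β` such that `1, α, β` are independent over
`𝔽_q`. The matrix with rows `u`, `v`, `α u + β v` has rank at least two unless `u = v = 0`:
relations `s`, `t` among the rows are relations of `u`, `v` with coefficients
`(s₀ + s₂ α, s₁ + s₂ β)` and `(t₀ + t₂ α, t₁ + t₂ β)`, whose determinant must vanish; the `αβ` terms
cancel and what remains is a combination of `1, α, β` with the minors of `(s, t)` as coefficients
(`isRankCode_mul`).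

For `n = 6` the row spaces of `[I | M]`, with `M` in this family, are the first `q^12` planes.

A line `L` of `S` is recorded by its reduced echelon matrix with pivots `i < j` and is extended by a
vector `(p, w)`, where `p ∈ T` is nonzero. The point `p` is the colour of the edge `{i, j}` in a
decomposition of the complete graph `K₆` into five perfect matchings (`colour_proper`), the colours
being five pairwise independent vectors of `T`. The vector `w` vanishes at the pivots, and its other
four coordinates complete the two non-pivot rows of `L` to a member of the family above with `n = 4`.
* Equal pivots: common vectors have equal coordinates in both planes, so the rank of the difference
  of the two matrices bounds the intersection (`dep_line_same`).
* Different pivots, equal colour: the pivot sets are disjoint, so the lines meet trivially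
  (`Echelon.disjoint`) and a common vector is determined by its component along `p`.
* Different colours: common vectors lie on both lines, which are distinct (`Echelon.dep`).
* A plane of the first part contains no nonzero vector of `S`, while one of the second part has
  one-dimensional image in `T` (`dep_lift_line`).
-/

namespace CDC

open Module

variable {F : Type*} [Field F]

/-! ### Proportional vectors -/

/-- `x` and `y` are proportional: they satisfy a nontrivial linear relation. -/
def Dep {V : Type*} [AddCommGroup V] [Module F V] (x y : V) : Prop :=
  ∃ a b : F, (a ≠ 0 ∨ b ≠ 0) ∧ a • x + b • y = 0

section Dep

variable {V : Type*} [AddCommGroup V] [Module F V]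

lemma Dep.map {W : Type*} [AddCommGroup W] [Module F W] {x y : V} (f : V →ₗ[F] W)
    (h : Dep (F := F) x y) : Dep (F := F) (f x) (f y) := by
  obtain ⟨a, b, hab, e⟩ := h
  exact ⟨a, b, hab, by rw [← map_smul, ← map_smul, ← map_add, e, map_zero]⟩

lemma dep_smul (z : V) (c d : F) : Dep (F := F) (c • z) (d • z) := by
  by_cases hc : c = 0
  · exact ⟨1, 0, Or.inl one_ne_zero, by simp [hc]⟩
  · exact ⟨d, -c, Or.inr (neg_ne_zero.2 hc), by
      rw [smul_smul, smul_smul, ← add_smul]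
      rw [show d * c + -c * d = 0 by ring, zero_smul]⟩

/-- If a linear functional vanishes only at zero on the span of `x` and `y`, these vectors are proportional. -/
lemma dep_of_functional {x y : V} (f : V →ₗ[F] F)
    (h : ∀ a b : F, f (a • x + b • y) = 0 → a • x + b • y = 0) : Dep (F := F) x y := by
  by_cases hx : f x = 0
  · exact ⟨1, 0, Or.inl one_ne_zero, h 1 0 (by simp [hx])⟩
  · exact ⟨f y, -f x, Or.inr (neg_ne_zero.2 hx), h _ _ (by simp; ring)⟩

lemma finrank_le_one_of_dep (W : Submodule F V)
    (h : ∀ x ∈ W, ∀ y ∈ W, Dep (F := F) x y) : finrank F W ≤ 1 := by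
  by_cases hW : W = ⊥
  · subst hW; simp
  · obtain ⟨z, hz, hz0⟩ := Submodule.exists_mem_ne_zero_of_ne_bot hW
    refine finrank_le_one (⟨z, hz⟩ : W) ?_
    rintro ⟨w, hw⟩
    obtain ⟨a, b, hab, e⟩ := h z hz w hw
    have hb : b ≠ 0 := by
      rintro rfl
      have ha : a ≠ 0 := by simpa using hab
      simp [ha, hz0] at e
    refine ⟨-(b⁻¹ * a), Subtype.ext ?_⟩
    have e' : b • w = -(a • z) := by rw [eq_neg_iff_add_eq_zero, add_comm]; exact e
    simp only [SetLike.mk_smul_mk]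
    rw [neg_smul, mul_smul, ← smul_neg, ← e', inv_smul_smul₀ hb]

end Dep

/-! ### Rank-metric codes from field multiplication -/

/-- The pair `A`, `B` gives a rank-metric code on `U`: for `u, v ∈ U` not both zero, the matrix with
rows `u`, `v`, `A u + B v` has rank at least two, i.e. its left kernel is at most
one-dimensional. -/
def IsRankCode {V : Type*} [AddCommGroup V] [Module F V] (A B : V →ₗ[F] V) (U : Set V) : Prop :=
  ∀ u ∈ U, ∀ v ∈ U, ¬ (u = 0 ∧ v = 0) → ∀ s t : Fin 3 → F,
    s 0 • u + s 1 • v + s 2 • (A u + B v) = 0 →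
    t 0 • u + t 1 • v + t 2 • (A u + B v) = 0 → Dep (F := F) s t

/-- If all `2 × 2` minors of the matrix with rows `s`, `t` vanish, then `s` and `t` are
proportional. -/
lemma dep_of_minors {s t : Fin 3 → F} (h01 : s 0 * t 1 - s 1 * t 0 = 0)
    (h02 : s 0 * t 2 - s 2 * t 0 = 0) (h12 : s 1 * t 2 - s 2 * t 1 = 0) :
    Dep (F := F) s t := by
  by_cases hs : s = 0
  · exact ⟨1, 0, Or.inl one_ne_zero, by simp [hs]⟩
  · obtain ⟨k, hk⟩ := Function.ne_iff.1 hs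
    refine ⟨-t k, s k, Or.inr hk, ?_⟩
    ext l
    simp only [Pi.add_apply, Pi.smul_apply, smul_eq_mul, Pi.zero_apply]
    fin_cases k <;> fin_cases l <;> simp <;> grind

/-- Multiplications by `α` and `β` in an extension field, with `1, α, β` linearly independent over
the base field, form a rank-metric code: the determinant of two relations on `(u, v)` is the
combination of `1, β, -α` whose coefficients are the three minors. -/
lemma isRankCode_mul {K : Type*} [Field K] [Algebra F K] (α β : K)
    (h : ∀ a b c : F, algebraMap F K a + algebraMap F K b * α + algebraMap F K c * β = 0 →
      a = 0 ∧ b = 0 ∧ c = 0) :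
    IsRankCode (LinearMap.mulLeft F α) (LinearMap.mulLeft F β) Set.univ := by
  intro u _ v _ huv s t hs ht
  simp only [LinearMap.mulLeft_apply, Algebra.smul_def] at hs ht
  set m := algebraMap F K
  have hdet : (m (s 0) + m (s 2) * α) * (m (t 1) + m (t 2) * β)
      - (m (s 1) + m (s 2) * β) * (m (t 0) + m (t 2) * α) = 0 := by
    by_cases hu : u = 0
    · have hv : v ≠ 0 := fun hv => huv ⟨hu, hv⟩
      apply mul_right_cancel₀ hv
      linear_combination (m (s 0) + m (s 2) * α) * ht - (m (t 0) + m (t 2) * α) * hs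
    · apply mul_right_cancel₀ hu
      linear_combination (m (t 1) + m (t 2) * β) * hs - (m (s 1) + m (s 2) * β) * ht
  have := h (s 0 * t 1 - s 1 * t 0) (s 2 * t 1 - s 1 * t 2) (s 0 * t 2 - s 2 * t 0) (by
    simp only [map_sub, map_mul]
    linear_combination hdet)
  obtain ⟨h1, h2, h3⟩ := this
  exact dep_of_minors h1 h3 (by linear_combination -h2)

/-- Transport of the multiplication code from the extension of degree `card κ`. -/
lemma exists_isRankCode [Finite F] (κ : Type) [Fintype κ] (hκ : 3 ≤ Fintype.card κ) :
    ∃ A B : (κ → F) →ₗ[F] (κ → F), IsRankCode A B Set.univ := by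
  obtain ⟨p, hp⟩ := CharP.exists F
  have hprime : Fact p.Prime := ⟨CharP.char_is_prime F p⟩
  have hne : NeZero (Fintype.card κ) := ⟨by omega⟩
  let K := FiniteField.Extension F p (Fintype.card κ)
  have hK : finrank F K = Fintype.card κ := FiniteField.finrank_extension F p _
  let b := finBasis F K
  let k (n : Fin 3) : Fin (finrank F K) := ⟨n, by have := n.2; omega⟩
  have hk : Function.Injective k := fun m n h => Fin.ext (by simpa [k] using h)
  have hb : LinearIndependent F (b ∘ k) := b.linearIndependent.comp k hk
  have hb0 : b (k 0) ≠ 0 := b.ne_zero _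
  have hmul := isRankCode_mul (F := F) (b (k 1) / b (k 0)) (b (k 2) / b (k 0)) (by
    intro x y z h
    have := Fintype.linearIndependent_iff.1 hb ![x, y, z] (by
      simp only [Fin.sum_univ_three, Function.comp_apply, Matrix.cons_val, Algebra.smul_def]
      have h1 := div_mul_cancel₀ (b (k 1)) hb0
      have h2 := div_mul_cancel₀ (b (k 2)) hb0
      linear_combination b (k 0) * h - algebraMap F K y * h1 - algebraMap F K z * h2)
    exact ⟨by simpa using this 0, by simpa using this 1, by simpa using this 2⟩)
  let e : K ≃ₗ[F] (κ → F) := LinearEquiv.ofFinrankEq _ _ (by rw [hK, finrank_fintype_fun_eq_card])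
  refine ⟨e.conj (LinearMap.mulLeft F (b (k 1) / b (k 0))),
    e.conj (LinearMap.mulLeft F (b (k 2) / b (k 0))), ?_⟩
  intro u _ v _ huv s t hs ht
  refine hmul (e.symm u) trivial (e.symm v) trivial (by simpa using huv) s t ?_ ?_
  · simpa [LinearEquiv.conj_apply] using congrArg e.symm hs
  · simpa [LinearEquiv.conj_apply] using congrArg e.symm ht

/-- A rank-metric code on the vectors vanishing at two given coordinates, whose third rows vanish
there as well. -/
lemma exists_isRankCode_vanishing [Finite F] (i j : Fin 6) (hij : i ≠ j) :
    ∃ A B : (Fin 6 → F) →ₗ[F] (Fin 6 → F),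
      (∀ u, A u i = 0 ∧ A u j = 0 ∧ B u i = 0 ∧ B u j = 0) ∧
      IsRankCode A B {u | u i = 0 ∧ u j = 0} := by
  let κ := {k : Fin 6 // k ≠ i ∧ k ≠ j}
  have hκ : 3 ≤ Fintype.card κ := by
    simp only [κ, Fintype.card_subtype]
    revert i j; decide
  obtain ⟨A, B, h⟩ := exists_isRankCode (F := F) κ hκ
  let res : (Fin 6 → F) →ₗ[F] (κ → F) := LinearMap.funLeft F F Subtype.val
  let ext : (κ → F) →ₗ[F] (Fin 6 → F) := Function.ExtendByZero.linearMap F Subtype.val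
  have hres (x : κ → F) : res (ext x) = x := by
    funext k
    simp [res, ext, LinearMap.funLeft_apply, Subtype.val_injective.extend_apply]
  have hi (x : κ → F) : ext x i = 0 := by
    simp only [ext, Function.ExtendByZero.linearMap_apply]
    rw [Function.extend_apply']; rfl
    rintro ⟨⟨k, hk⟩, h⟩; exact hk.1 h
  have hj (x : κ → F) : ext x j = 0 := by
    simp only [ext, Function.ExtendByZero.linearMap_apply]
    rw [Function.extend_apply']; rfl
    rintro ⟨⟨k, hk⟩, h⟩; exact hk.2 h
  have hinj (u : Fin 6 → F) (hu : u i = 0 ∧ u j = 0) (h0 : res u = 0) : u = 0 := by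
    funext k
    by_cases h1 : k = i
    · rw [h1]; exact hu.1
    by_cases h2 : k = j
    · rw [h2]; exact hu.2
    exact congrFun h0 ⟨k, h1, h2⟩
  refine ⟨ext ∘ₗ A ∘ₗ res, ext ∘ₗ B ∘ₗ res, fun u => ⟨hi _, hj _, hi _, hj _⟩, ?_⟩
  intro u hu v hv huv s t hs ht
  refine h (res u) trivial (res v) trivial
    (fun h => huv ⟨hinj u hu h.1, hinj v hv h.2⟩) s t ?_ ?_
  · simpa [hres] using congrArg res hs
  · simpa [hres] using congrArg res ht

/-! ### Planes given by three vectors -/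

/-- The subspace spanned by the three vectors `b`. -/
def plane {V : Type*} [AddCommGroup V] [Module F V] (b : Fin 3 → V) : Submodule F V :=
  LinearMap.range (Fintype.linearCombination F b)

lemma finrank_plane {V : Type*} [AddCommGroup V] [Module F V] {b : Fin 3 → V}
    (h : ∀ t : Fin 3 → F, Fintype.linearCombination F b t = 0 → t = 0) :
    finrank F (plane (F := F) b) = 3 := by
  rw [plane, LinearMap.finrank_range_of_inj, finrank_fin_fun]
  rw [injective_iff_map_eq_zero]
  exact h

/-- The ambient space, split as the complement of the special 6-dimensional subspace `S` and `S`
itself. -/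
abbrev Amb (F : Type*) := (Fin 3 → F) × (Fin 6 → F)

/-- The lifting of a `3 × 6` matrix: the rows of `[I | M]`. -/
def liftBasis (a b c : Fin 6 → F) : Fin 3 → Amb F :=
  ![(Pi.single 0 1, a), (Pi.single 1 1, b), (Pi.single 2 1, c)]

lemma lift_comb (a b c : Fin 6 → F) (t : Fin 3 → F) :
    Fintype.linearCombination F (liftBasis a b c) t
      = (t, t 0 • a + t 1 • b + t 2 • c) := by
  simp only [Fintype.linearCombination_apply, Fin.sum_univ_three, liftBasis, Matrix.cons_val, Prod.smul_mk, Prod.mk_add_mk, Prod.mk.injEq, and_true]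
  ext k
  fin_cases k <;> simp

/-- The plane over the line `⟨r, r'⟩` of `S` extended by `(p, w)`. -/
def lineBasis (p : Fin 3 → F) (w r r' : Fin 6 → F) : Fin 3 → Amb F :=
  ![(0, r), (0, r'), (p, w)]

lemma line_comb (p : Fin 3 → F) (w r r' : Fin 6 → F) (t : Fin 3 → F) :
    Fintype.linearCombination F (lineBasis p w r r') t
      = (t 2 • p, t 0 • r + t 1 • r' + t 2 • w) := by
  simp [lineBasis, Fintype.linearCombination_apply, Fin.sum_univ_three]

/-! ### Lines of `S` in reduced echelon form -/

/-- `u` and `v` are the non-pivot parts of a reduced row echelon matrix with two rows and pivot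
columns `i < j`. -/
structure Echelon (i j : Fin 6) (u v : Fin 6 → F) : Prop where
  lt : i < j
  fst : ∀ k, k ≤ i ∨ k = j → u k = 0
  snd : ∀ k, k ≤ j → v k = 0

/-- The element of a line in reduced echelon form with coordinates `c`, `d`. -/
def row (i j : Fin 6) (u v : Fin 6 → F) (c d : F) : Fin 6 → F :=
  c • (Pi.single i 1 + u) + d • (Pi.single j 1 + v)

namespace Echelon

variable {i j : Fin 6} {u v : Fin 6 → F}

lemma row_lt (h : Echelon i j u v) (c d : F) {k : Fin 6} (hk : k < i) : row i j u v c d k = 0 := by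
  have h1 := h.fst k (Or.inl hk.le)
  have h2 := h.snd k (hk.trans h.lt).le
  simp [row, h1, h2, hk.ne, (hk.trans h.lt).ne]

lemma row_fst (h : Echelon i j u v) (c d : F) : row i j u v c d i = c := by
  have h1 := h.fst i (Or.inl le_rfl)
  have h2 := h.snd i h.lt.le
  simp [row, h1, h2, h.lt.ne]

lemma row_snd (h : Echelon i j u v) (c d : F) : row i j u v c d j = d := by
  have h1 := h.fst j (Or.inr rfl)
  have h2 := h.snd j le_rfl
  simp [row, h1, h2, h.lt.ne']

lemma row_zero_lt (h : Echelon i j u v) (d : F) {k : Fin 6} (hk : k < j) :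
    row i j u v 0 d k = 0 := by
  have h2 := h.snd k hk.le
  simp [row, h2, hk.ne]

lemma smul_row (a c d : F) : a • row i j u v c d = row i j u v (a * c) (a * d) := by
  simp [row, smul_smul]

lemma add_row (c d c' d' : F) :
    row i j u v c d + row i j u v c' d' = row i j u v (c + c') (d + d') := by
  simp only [row, add_smul]; abel

variable {i' j' : Fin 6} {u' v' : Fin 6 → F}

/-- Lines with disjoint pivot sets meet trivially, because the leading position of a vector of a
line is one of its pivots. -/
lemma disjoint (h : Echelon i j u v) (h' : Echelon i' j' u' v')
    (hii : i ≠ i') (hij : i ≠ j') (hji : j ≠ i') (hjj : j ≠ j') {c d c' d' : F}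
    (e : row i j u v c d = row i' j' u' v' c' d') : row i j u v c d = 0 := by
  wlog hlt : i < i' generalizing i j u v i' j' u' v' c d c' d'
  · rw [e]
    exact this h' h hii.symm hji.symm hij.symm hjj.symm e.symm
      (lt_of_le_of_ne (not_lt.1 hlt) hii.symm)
  have hc : c = 0 := by
    rw [← h.row_fst c d, e, h'.row_lt _ _ hlt]
  subst hc
  have hd : d = 0 := by
    rcases lt_or_gt_of_ne hji with h1 | h1
    · rw [← h.row_snd 0 d, e, h'.row_lt _ _ h1]
    · have hc' : c' = 0 := by
        rw [← h'.row_fst c' d', ← e, h.row_zero_lt _ h1]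
      subst hc'
      rcases lt_or_gt_of_ne hjj with h2 | h2
      · rw [← h.row_snd 0 d, e, h'.row_zero_lt _ h2]
      · have hd' : d' = 0 := by
          rw [← h'.row_snd 0 d', ← e, h.row_zero_lt _ h2]
        rw [← h.row_snd 0 d, e, hd']
        simp [row]
  simp [row, hd]

/-- Lines with different pivot sets meet in dimension at most one. -/
lemma dep (h : Echelon i j u v) (h' : Echelon i' j' u' v')
    (hne : ¬ (i = i' ∧ j = j')) {c₁ d₁ c₁' d₁' c₂ d₂ c₂' d₂' : F}
    (e₁ : row i j u v c₁ d₁ = row i' j' u' v' c₁' d₁')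
    (e₂ : row i j u v c₂ d₂ = row i' j' u' v' c₂' d₂') :
    Dep (F := F) (row i j u v c₁ d₁) (row i j u v c₂ d₂) := by
  wlog hlt : i < i' ∨ (i = i' ∧ j < j') generalizing i j u v i' j' u' v' c₁ d₁ c₂ d₂ c₁' d₁' c₂' d₂'
  · rw [e₁, e₂]
    refine this h' h ?_ e₁.symm e₂.symm ?_
    · rintro ⟨rfl, rfl⟩; exact hne ⟨rfl, rfl⟩
    · omega
  rcases hlt with hlt | ⟨rfl, hlt⟩
  · have hc {c d c' d' : F} (e : row i j u v c d = row i' j' u' v' c' d') : c = 0 := by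
      rw [← h.row_fst c d, e, h'.row_lt _ _ hlt]
    rw [hc e₁, hc e₂]
    simpa only [row, zero_smul, zero_add] using
      dep_smul (F := F) (Pi.single j 1 + v) d₁ d₂
  ·
    -- The first pivot coordinate determines the common vector.
    refine dep_of_functional (LinearMap.proj i) fun a b hab => ?_
    have e : row i j u v (a * c₁ + b * c₂) (a * d₁ + b * d₂)
        = row i j' u' v' (a * c₁' + b * c₂') (a * d₁' + b * d₂') := by
      rw [← add_row, ← add_row, ← smul_row, ← smul_row, ← smul_row, ← smul_row, e₁, e₂]
    rw [smul_row, smul_row, add_row] at hab ⊢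
    rw [LinearMap.proj_apply, h.row_fst] at hab
    rw [hab] at e ⊢
    have hc' : a * c₁' + b * c₂' = 0 := by
      rw [← h'.row_fst (a * c₁' + b * c₂') (a * d₁' + b * d₂'), ← e, h.row_fst]
    rw [hc'] at e
    have hd : a * d₁ + b * d₂ = 0 := by
      rw [← h.row_snd 0 (a * d₁ + b * d₂), e, h'.row_zero_lt _ hlt]
    simp [row, hd]

end Echelon

/-! ### Colouring of the pivot sets -/

/-- A proper edge colouring of the complete graph on six vertices with five colours: the edges
between finite points `i`, `j` get `i + j` modulo five, and the edge from `i` to the point `5` at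
infinity gets `2 * i`. The intended arguments satisfy `i < j`. -/
def colour (i j : Fin 6) : Fin 5 :=
  if j = 5 then Fin.ofNat 5 (2 * i.val) else Fin.ofNat 5 (i.val + j.val)

lemma colour_proper : ∀ i j i' j' : Fin 6, i < j → i' < j' → colour i j = colour i' j' →
    (i = i' ∧ j = j') ∨ (i ≠ i' ∧ i ≠ j' ∧ j ≠ i' ∧ j ≠ j') := by
  decide

/-- Five pairwise independent vectors, available over every field. -/
def point : Fin 5 → Fin 3 → F :=
  ![![1, 0, 0], ![0, 1, 0], ![0, 0, 1], ![1, 1, 0], ![1, 0, 1]]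

lemma point_ne_zero (k : Fin 5) : (point k : Fin 3 → F) ≠ 0 := by
  intro h
  have h0 := congrFun h 0
  have h1 := congrFun h 1
  have h2 := congrFun h 2
  fin_cases k <;> simp [point] at h0 h1 h2

lemma point_indep {k l : Fin 5} (hkl : k ≠ l) {a b : F} (h : a • (point k : Fin 3 → F) = b • point l) :
    a = 0 ∧ b = 0 := by
  have h0 := congrFun h 0
  have h1 := congrFun h 1
  have h2 := congrFun h 2
  clear h
  fin_cases k <;> fin_cases l <;> simp [point] at hkl h0 h1 h2 ⊢ <;> grind

/-! ### The two families of codewords -/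

/-- The lifting of the `3 × 6` matrix with rows `u`, `v`, `A u + B v`. -/
def liftCode (A B : (Fin 6 → F) →ₗ[F] (Fin 6 → F)) (u v : Fin 6 → F) : Submodule F (Amb F) :=
  plane (liftBasis u v (A u + B v))

/-- The plane over the line of `S` with reduced echelon data `(i, j, u, v)`, extended by the vector
`(p, A u + B v)`, where the point `p` is the colour of the pivot set `{i, j}`. -/
def lineCode (A B : (Fin 6 → F) →ₗ[F] (Fin 6 → F)) (i j : Fin 6) (u v : Fin 6 → F) :
    Submodule F (Amb F) :=
  plane (lineBasis (point (colour i j)) (A u + B v) (Pi.single i 1 + u) (Pi.single j 1 + v))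

lemma mem_liftCode {A B : (Fin 6 → F) →ₗ[F] (Fin 6 → F)} {u v : Fin 6 → F} {x : Amb F} :
    x ∈ liftCode A B u v ↔ ∃ t : Fin 3 → F, (t, t 0 • u + t 1 • v + t 2 • (A u + B v)) = x := by
  simp only [liftCode, plane, LinearMap.mem_range, lift_comb]

lemma mem_lineCode {A B : (Fin 6 → F) →ₗ[F] (Fin 6 → F)} {i j : Fin 6} {u v : Fin 6 → F}
    {x : Amb F} :
    x ∈ lineCode A B i j u v ↔ ∃ t : Fin 3 → F,
      (t 2 • point (colour i j), row i j u v (t 0) (t 1) + t 2 • (A u + B v)) = x := by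
  simp only [lineCode, plane, LinearMap.mem_range, line_comb, row]

lemma finrank_liftCode (A B : (Fin 6 → F) →ₗ[F] (Fin 6 → F)) (u v : Fin 6 → F) :
    finrank F (liftCode A B u v) = 3 := by
  refine finrank_plane fun t ht => ?_
  rw [lift_comb] at ht
  exact congrArg Prod.fst ht

lemma finrank_lineCode (A B : (Fin 6 → F) →ₗ[F] (Fin 6 → F)) {i j : Fin 6} {u v : Fin 6 → F}
    (h : Echelon i j u v) : finrank F (lineCode A B i j u v) = 3 := by
  refine finrank_plane fun t ht => ?_
  rw [line_comb, Prod.mk_eq_zero] at ht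
  obtain ⟨h1, h2⟩ := ht
  have t2 : t 2 = 0 := (smul_eq_zero.1 h1).resolve_right (point_ne_zero _)
  rw [t2, zero_smul, add_zero] at h2
  have t0 : t 0 = 0 := by rw [← h.row_fst (t 0) (t 1)]; exact congrFun h2 i
  have t1 : t 1 = 0 := by rw [← h.row_snd (t 0) (t 1)]; exact congrFun h2 j
  ext k
  fin_cases k <;> assumption

lemma dep_lift_lift {A B : (Fin 6 → F) →ₗ[F] (Fin 6 → F)} (hAB : IsRankCode A B Set.univ)
    {u v u' v' : Fin 6 → F} (hne : ¬ (u = u' ∧ v = v')) {x y : Amb F}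
    (hx : x ∈ liftCode A B u v) (hx' : x ∈ liftCode A B u' v')
    (hy : y ∈ liftCode A B u v) (hy' : y ∈ liftCode A B u' v') : Dep (F := F) x y := by
  rw [mem_liftCode] at hx hx' hy hy'
  have key {z : Amb F}
      (hz : ∃ t : Fin 3 → F, (t, t 0 • u + t 1 • v + t 2 • (A u + B v)) = z)
      (hz' : ∃ t : Fin 3 → F, (t, t 0 • u' + t 1 • v' + t 2 • (A u' + B v')) = z) :
      ∃ t : Fin 3 → F, Fintype.linearCombination F (liftBasis u v (A u + B v)) t = z ∧
        t 0 • (u - u') + t 1 • (v - v') + t 2 • (A (u - u') + B (v - v')) = 0 := by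
    obtain ⟨t, rfl⟩ := hz
    obtain ⟨t', e⟩ := hz'
    rw [Prod.mk.injEq] at e
    obtain ⟨rfl, e⟩ := e
    refine ⟨t', lift_comb _ _ _ _, ?_⟩
    rw [← sub_eq_zero] at e
    rw [map_sub, map_sub, ← neg_eq_zero, ← e]
    module
  obtain ⟨s, rfl, hs⟩ := key hx hx'
  obtain ⟨t, rfl, ht⟩ := key hy hy'
  refine Dep.map _ (hAB (u - u') trivial (v - v') trivial ?_ s t hs ht)
  rwa [sub_eq_zero, sub_eq_zero]

/-- Planes of the two families meet in dimension at most one, since the first ones avoid `S` and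
the second ones project to a single point of the complement. -/
lemma dep_lift_line {A B A' B' : (Fin 6 → F) →ₗ[F] (Fin 6 → F)} {i j : Fin 6}
    {u v u' v' : Fin 6 → F} {x y : Amb F}
    (hx : x ∈ liftCode A B u v) (hx' : x ∈ lineCode A' B' i j u' v')
    (hy : y ∈ liftCode A B u v) (hy' : y ∈ lineCode A' B' i j u' v') : Dep (F := F) x y := by
  obtain ⟨k, hk⟩ := Function.ne_iff.1 (point_ne_zero (F := F) (colour i j))
  refine dep_of_functional (LinearMap.proj k ∘ₗ LinearMap.fst F _ _) fun a b hab => ?_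
  obtain ⟨t, ht⟩ := mem_liftCode.1 (add_mem (Submodule.smul_mem _ a hx) (Submodule.smul_mem _ b hy))
  obtain ⟨t', ht'⟩ :=
    mem_lineCode.1 (add_mem (Submodule.smul_mem _ a hx') (Submodule.smul_mem _ b hy'))
  rw [← ht'] at hab
  have h2 : t' 2 = 0 := by
    simpa [show (point (colour i j) : Fin 3 → F) k ≠ 0 from hk] using hab
  have h0 : t = 0 := by
    have := congrArg Prod.fst (ht.trans ht'.symm)
    simpa [h2] using this
  rw [← ht, h0]
  simp

/-- Planes over lines with the same pivots: comparing pivot coordinates shows that a common vector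
has equal coordinates in both planes, and the rank-metric code applies. -/
lemma dep_line_same {A B : (Fin 6 → F) →ₗ[F] (Fin 6 → F)} {i j : Fin 6}
    (h0 : ∀ u, A u i = 0 ∧ A u j = 0 ∧ B u i = 0 ∧ B u j = 0)
    (hAB : IsRankCode A B {u | u i = 0 ∧ u j = 0})
    {u v u' v' : Fin 6 → F} (h : Echelon i j u v) (h' : Echelon i j u' v')
    (hne : ¬ (u = u' ∧ v = v')) {x y : Amb F}
    (hx : x ∈ lineCode A B i j u v) (hx' : x ∈ lineCode A B i j u' v')
    (hy : y ∈ lineCode A B i j u v) (hy' : y ∈ lineCode A B i j u' v') : Dep (F := F) x y := by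
  have key {z : Amb F} (hz : z ∈ lineCode A B i j u v) (hz' : z ∈ lineCode A B i j u' v') :
      ∃ t : Fin 3 → F, Fintype.linearCombination F (lineBasis (point (colour i j)) (A u + B v)
          (Pi.single i 1 + u) (Pi.single j 1 + v)) t = z ∧
        t 0 • (u - u') + t 1 • (v - v') + t 2 • (A (u - u') + B (v - v')) = 0 := by
    obtain ⟨t, rfl⟩ := mem_lineCode.1 hz
    obtain ⟨t', e⟩ := mem_lineCode.1 hz'
    rw [Prod.mk.injEq] at e
    obtain ⟨e1, e2⟩ := e
    have t2 : t' 2 = t 2 := smul_left_injective F (point_ne_zero _) e1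
    have t0 : t' 0 = t 0 := by
      have := congrFun e2 i
      simpa [h.row_fst, h'.row_fst, h0] using this
    have t1 : t' 1 = t 1 := by
      have := congrFun e2 j
      simpa [h.row_snd, h'.row_snd, h0] using this
    rw [t0, t1, t2] at e2
    refine ⟨t, line_comb _ _ _ _ _, ?_⟩
    rw [← sub_eq_zero] at e2
    rw [map_sub, map_sub, ← neg_eq_zero, ← e2]
    simp only [row]
    module
  obtain ⟨s, rfl, hs⟩ := key hx hx'
  obtain ⟨t, rfl, ht⟩ := key hy hy'
  have hi := h.fst i (Or.inl le_rfl)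
  have hi' := h'.fst i (Or.inl le_rfl)
  have hj := h.fst j (Or.inr rfl)
  have hj' := h'.fst j (Or.inr rfl)
  have gi := h.snd i h.lt.le
  have gi' := h'.snd i h.lt.le
  have gj := h.snd j le_rfl
  have gj' := h'.snd j le_rfl
  refine Dep.map _ (hAB (u - u') ?_ (v - v') ?_ ?_ s t hs ht)
  · simp [hi, hi', hj, hj']
  · simp [gi, gi', gj, gj']
  · rwa [sub_eq_zero, sub_eq_zero]

/-- Planes over lines with different pivots. If the colours differ, common vectors lie on both
lines. If the colours agree, the lines meet trivially, so the component along the common point `p`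
detects zero. -/
lemma dep_line_ne {A B A' B' : (Fin 6 → F) →ₗ[F] (Fin 6 → F)} {i j i' j' : Fin 6}
    {u v u' v' : Fin 6 → F} (h : Echelon i j u v) (h' : Echelon i' j' u' v')
    (hne : ¬ (i = i' ∧ j = j')) {x y : Amb F}
    (hx : x ∈ lineCode A B i j u v) (hx' : x ∈ lineCode A' B' i' j' u' v')
    (hy : y ∈ lineCode A B i j u v) (hy' : y ∈ lineCode A' B' i' j' u' v') :
    Dep (F := F) x y := by
  by_cases hc : colour i j = colour i' j'
  · obtain ⟨a1, a2, a3, a4⟩ := (colour_proper i j i' j' h.lt h'.lt hc).resolve_left hne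
    obtain ⟨k, hk⟩ := Function.ne_iff.1 (point_ne_zero (F := F) (colour i j))
    refine dep_of_functional (LinearMap.proj k ∘ₗ LinearMap.fst F _ _) fun a b hab => ?_
    obtain ⟨t, ht⟩ :=
      mem_lineCode.1 (add_mem (Submodule.smul_mem _ a hx) (Submodule.smul_mem _ b hy))
    obtain ⟨t', ht'⟩ :=
      mem_lineCode.1 (add_mem (Submodule.smul_mem _ a hx') (Submodule.smul_mem _ b hy'))
    have e := ht.trans ht'.symm
    rw [← hc, Prod.mk.injEq] at e
    have t2' : t' 2 = t 2 := (smul_left_injective F (point_ne_zero _) e.1).symm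
    rw [← ht] at hab
    have t2 : t 2 = 0 := by
      simpa [show (point (colour i j) : Fin 3 → F) k ≠ 0 from hk] using hab
    have e2 := e.2
    rw [t2', t2, zero_smul, zero_smul, add_zero, add_zero] at e2
    rw [← ht, t2, h.disjoint h' a1 a2 a3 a4 e2]
    simp
  · have key {z : Amb F} (hz : z ∈ lineCode A B i j u v) (hz' : z ∈ lineCode A' B' i' j' u' v') :
        ∃ c d c' d' : F, LinearMap.inr F (Fin 3 → F) (Fin 6 → F) (row i j u v c d) = z ∧
          row i j u v c d = row i' j' u' v' c' d' := by
      obtain ⟨t, rfl⟩ := mem_lineCode.1 hz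
      obtain ⟨t', e⟩ := mem_lineCode.1 hz'
      rw [Prod.mk.injEq] at e
      obtain ⟨b2, b1⟩ := point_indep (Ne.symm hc) e.1
      have e2 := e.2
      rw [b1, b2, zero_smul, zero_smul, add_zero, add_zero] at e2
      exact ⟨t 0, t 1, t' 0, t' 1, by simp [b1], e2.symm⟩
    obtain ⟨c₁, d₁, c₁', d₁', rfl, e₁⟩ := key hx hx'
    obtain ⟨c₂, d₂, c₂', d₂', rfl, e₂⟩ := key hy hy'
    exact Dep.map _ (h.dep h' hne e₁ e₂)

/-! ### Counting -/

/-- The vectors of `F ^ 6` that vanish at all positions satisfying `P`. -/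
noncomputable def vanishing (F : Type*) [Field F] [Fintype F] (P : Fin 6 → Prop)
    [DecidablePred P] : Finset (Fin 6 → F) :=
  Fintype.piFinset fun k => if P k then {0} else Finset.univ

lemma mem_vanishing [Fintype F] {P : Fin 6 → Prop} [DecidablePred P] {u : Fin 6 → F} :
    u ∈ vanishing F P ↔ ∀ k, P k → u k = 0 := by
  simp only [vanishing, Fintype.mem_piFinset]
  refine forall_congr' fun k => ?_
  by_cases h : P k <;> simp [h]

lemma card_vanishing [Fintype F] {P : Fin 6 → Prop} [DecidablePred P] :
    (vanishing F P).card = ∏ k, if P k then 1 else Fintype.card F := by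
  rw [vanishing, Fintype.card_piFinset]
  refine Finset.prod_congr rfl fun k _ => ?_
  split_ifs <;> simp

/-- Reduced echelon data of the lines of `S`. -/
noncomputable def lines (F : Type*) [Field F] [Fintype F] :
    Finset ((_ : Fin 6 × Fin 6) × (Fin 6 → F) × (Fin 6 → F)) :=
  (Finset.univ.filter fun ij : Fin 6 × Fin 6 => ij.1 < ij.2).sigma fun ij =>
    vanishing F (fun k => k ≤ ij.1 ∨ k = ij.2) ×ˢ vanishing F (fun k => k ≤ ij.2)

lemma echelon_of_mem_lines [Fintype F] {l : (_ : Fin 6 × Fin 6) × (Fin 6 → F) × (Fin 6 → F)}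
    (h : l ∈ lines F) : Echelon l.1.1 l.1.2 l.2.1 l.2.2 := by
  simp only [lines, Finset.mem_sigma, Finset.mem_filter, Finset.mem_univ, true_and,
    Finset.mem_product, mem_vanishing] at h
  exact ⟨h.1, h.2.1, h.2.2⟩

lemma card_lines [Fintype F] {q : ℕ} (hq : Fintype.card F = q) : (lines F).card =
    q^8 + q^7 + 2*q^6 + 2*q^5 + 3*q^4 + 2*q^3 + 2*q^2 + q + 1 := by
  rw [lines, Finset.card_sigma, Finset.sum_filter]
  simp only [Finset.card_product, card_vanishing, hq, Fintype.sum_prod_type, Fin.sum_univ_six,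
    Fin.prod_univ_six]
  simp +decide only [if_true, if_false, one_mul, mul_one]
  ring

end CDC

open CDC in
/-- Over any finite field with `q` elements there exists a constant
dimension code of 3-dimensional subspaces of `𝔽_q^9` of cardinality `q^12 + q^8 + q^7 + 2*q^6 + 2*q^5 + 3*q^4 + 2*q^3 + 2*q^2 + q + 1`
with minimum subspace distance 4. -/
theorem constant_dimension_code_G3_9
    (𝔽 : Type*) [Field 𝔽] [Fintype 𝔽] (q : ℕ) (hq : Fintype.card 𝔽 = q) :
    ∃ C : Finset (Submodule 𝔽 (Fin 9 → 𝔽)),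
      C.card = q^12 + q^8 + q^7 + 2*q^6 + 2*q^5 + 3*q^4 + 2*q^3 + 2*q^2 + q + 1 ∧
      (∀ U ∈ C, Module.finrank 𝔽 U = 3) ∧
      (∀ U ∈ C, ∀ V ∈ C, U ≠ V →
        4 ≤ 2 * (3 - Module.finrank 𝔽 (U ⊓ V : Submodule 𝔽 (Fin 9 → 𝔽)))) := by
  classical
  obtain ⟨A₀, B₀, h₀⟩ := exists_isRankCode (F := 𝔽) (Fin 6) (by simp)
  have hAB (ij : Fin 6 × Fin 6) : ∃ A B : (Fin 6 → 𝔽) →ₗ[𝔽] (Fin 6 → 𝔽), ij.1 ≠ ij.2 →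
      (∀ u, A u ij.1 = 0 ∧ A u ij.2 = 0 ∧ B u ij.1 = 0 ∧ B u ij.2 = 0) ∧
      IsRankCode A B {u | u ij.1 = 0 ∧ u ij.2 = 0} := by
    by_cases h : ij.1 = ij.2
    · exact ⟨0, 0, fun h' => absurd h h'⟩
    · obtain ⟨A, B, h⟩ := exists_isRankCode_vanishing (F := 𝔽) ij.1 ij.2 h
      exact ⟨A, B, fun _ => h⟩
  choose A B hAB using hAB
  let e : Amb 𝔽 ≃ₗ[𝔽] (Fin 9 → 𝔽) := LinearEquiv.ofFinrankEq _ _ (by simp)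
  let D : Finset (((Fin 6 → 𝔽) × (Fin 6 → 𝔽)) ⊕
      ((_ : Fin 6 × Fin 6) × (Fin 6 → 𝔽) × (Fin 6 → 𝔽))) := Finset.univ.disjSum (lines 𝔽)
  let code : ((Fin 6 → 𝔽) × (Fin 6 → 𝔽)) ⊕ ((_ : Fin 6 × Fin 6) × (Fin 6 → 𝔽) × (Fin 6 → 𝔽)) →
      Submodule 𝔽 (Amb 𝔽) :=
    Sum.elim (fun m => liftCode A₀ B₀ m.1 m.2)
      (fun l => lineCode (A l.1) (B l.1) l.1.1 l.1.2 l.2.1 l.2.2)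
  have hcode : ∀ a ∈ D, Module.finrank 𝔽 (code a) = 3 := by
    rintro (m | l) ha
    · exact finrank_liftCode _ _ _ _
    · exact finrank_lineCode _ _ (echelon_of_mem_lines (by simpa [D] using ha))
  have hinter : ∀ a ∈ D, ∀ b ∈ D, a ≠ b → Module.finrank 𝔽 ↥(code a ⊓ code b) ≤ 1 := by
    intro a ha b hb hab
    refine finrank_le_one_of_dep _ ?_
    rintro x ⟨hx, hx'⟩ y ⟨hy, hy'⟩
    rcases a with ⟨u, v⟩ | ⟨⟨i, j⟩, u, v⟩ <;> rcases b with ⟨u', v'⟩ | ⟨⟨i', j'⟩, u', v'⟩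
    · refine dep_lift_lift h₀ ?_ hx hx' hy hy'
      rintro ⟨h1, h2⟩
      simp only at h1 h2
      exact hab (by rw [h1, h2])
    · exact dep_lift_line hx hx' hy hy'
    · exact dep_lift_line hx' hx hy' hy
    · have h := echelon_of_mem_lines (F := 𝔽) (by simpa [D] using ha)
      have h' := echelon_of_mem_lines (F := 𝔽) (by simpa [D] using hb)
      by_cases hp : i = i' ∧ j = j'
      · obtain ⟨rfl, rfl⟩ := hp
        obtain ⟨h1, h2⟩ := hAB (i, j) h.lt.ne
        refine dep_line_same h1 h2 h h' ?_ hx hx' hy hy'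
        rintro ⟨h1, h2⟩
        simp only at h1 h2
        exact hab (by rw [h1, h2])
      · exact dep_line_ne h h' hp hx hx' hy hy'
  have hinj : Set.InjOn (fun a => (code a).map e.toLinearMap) D := by
    intro a ha b hb hab
    by_contra hne
    have h1 : code a = code b := Submodule.map_injective_of_injective e.injective hab
    have h2 := hinter a ha b hb hne
    rw [← h1, inf_idem, hcode a ha] at h2
    omega
  refine ⟨D.image fun a => (code a).map e.toLinearMap, ?_, ?_, ?_⟩
  · rw [Finset.card_image_of_injOn hinj, Finset.card_disjSum, card_lines hq, Finset.card_univ,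
      Fintype.card_prod, Fintype.card_fun, hq, Fintype.card_fin]
    ring
  · intro U hU
    obtain ⟨a, ha, rfl⟩ := Finset.mem_image.1 hU
    rw [e.finrank_map_eq, hcode a ha]
  · intro U hU V hV hUV
    obtain ⟨a, ha, rfl⟩ := Finset.mem_image.1 hU
    obtain ⟨b, hb, rfl⟩ := Finset.mem_image.1 hV
    have hne : a ≠ b := by rintro rfl; exact hUV rfl
    have h := hinter a ha b hb hne
    rw [← e.finrank_map_eq, Submodule.map_inf _ e.injective] at h
    have h' : Module.finrank 𝔽 ↥((code a).map e.toLinearMap ⊓ (code b).map e.toLinearMap) ≤ 1 := h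
    omega
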